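/- If X₁ ~ N(m₁,σ₁²) and X₂ ~ N(m₂,σ₂²) are jointly Gaussian with correlation ρ₁₂, then E[exp(max(X₁,X₂))] = exp(m₁+σ₁²/2)·Φ((m₁−m₂+σ₁²−ρ₁₂σ₁σ₂)/√(σ₁²+σ₂²−2ρ₁₂σ₁σ₂)) + exp(m₂+σ₂²/2)·Φ((m₂−m₁+σ₂²−ρ₁₂σ₁σ₂)/√(σ₁²+σ₂²−2ρ₁₂σ₁σ₂)), where Φ is the standard Gaussian CDF. -/

import Mathlib

/-!
The proof is a change of measure. Since `exp (max X₁ X₂)` equals `exp X₁` on `{X₁ - X₂ ≥ 0}` and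
`exp X₂` on `{X₂ - X₁ > 0}`, the expectation is a sum of two integrals `∫_{D ∈ A} exp Y dμ` with
`(Y, D)` jointly Gaussian. Under the exponentially tilted measure `μ.tilted Y`, the variable `D` is
again Gaussian with the same variance, its mean shifted by the covariance of `Y` and `D`: its moment
generating function is the quotient `E[exp (Y + t D)] / E[exp Y]`, which is known because `Y + t D`
is Gaussian, and the moment generating function determines the law
(`map_tilted_eq_gaussianReal`). Hence the integral is `E[exp Y]` times a Gaussian tail
probability, which is a value of `Φ`. Only the laws of linear combinations enter, so no density
of the pair is needed.
-/

open MeasureTheory ProbabilityTheory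

/-- The standard Gaussian cumulative distribution function `Φ`. -/
noncomputable def stdGaussianCDF (x : ℝ) : ℝ :=
  ∫ t in Set.Iic x, Real.exp (-t ^ 2 / 2) / Real.sqrt (2 * Real.pi)

/-- The real moment generating function of a Gaussian is finite everywhere, so it extends
analytically to the whole complex plane and determines the characteristic function. -/
lemma map_eq_gaussianReal_of_mgf {Ω : Type*} [MeasurableSpace Ω] {μ : Measure Ω}
    [IsProbabilityMeasure μ] {D : Ω → ℝ} (hD : AEMeasurable D μ) (m : ℝ) (v : NNReal)
    (h : ∀ t, mgf D μ t = Real.exp (m * t + v * t ^ 2 / 2)) :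
    μ.map D = gaussianReal m v := by
  have hmgf : mgf id (gaussianReal m v) = mgf D μ := by
    rw [mgf_id_gaussianReal]
    exact (funext h).symm
  have hEq := eqOn_complexMGF_of_mgf hmgf
  have hc : complexMGF id (gaussianReal m v) = complexMGF D μ := by
    funext z
    exact hEq (by simp)
  simpa using (Measure.ext_of_complexMGF_eq aemeasurable_id hD hc).symm

/-- If `Y + t D` has the exponential moments of a Gaussian with mean `a + t d` and variance
`V + 2 t C + t² S`, then under the tilted measure `D` is Gaussian with mean `d + C` and
variance `S`. -/
lemma map_tilted_eq_gaussianReal {Ω : Type*} [MeasurableSpace Ω] {μ : Measure Ω}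
    [IsProbabilityMeasure μ] {Y D : Ω → ℝ} (hD : AEMeasurable D μ) {a d V C S : ℝ} (hS : 0 ≤ S)
    (hexp : Integrable (fun ω => Real.exp (Y ω)) μ)
    (h : ∀ t : ℝ, ∫ ω, Real.exp (Y ω + t * D ω) ∂μ =
      Real.exp (a + t * d + (V + 2 * t * C + t ^ 2 * S) / 2)) :
    (μ.tilted Y).map D = gaussianReal (d + C) S.toNNReal := by
  have := isProbabilityMeasure_tilted hexp
  refine map_eq_gaussianReal_of_mgf (hD.mono_ac (tilted_absolutelyContinuous μ Y)) _ _ fun t => ?_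
  have h0 := h 0
  simp only [zero_mul, add_zero, mul_zero, ne_eq, OfNat.ofNat_ne_zero, not_false_eq_true,
    zero_pow] at h0
  rw [mgf, integral_exp_tilted]
  simp only [Pi.add_apply]
  rw [h t, h0, ← Real.exp_sub, Real.coe_toNNReal _ hS]
  congr 1
  ring

/-- The tilted law of `D` turned into an integral against `μ`: the factor `exp (a + V / 2)` is
`E[exp Y]`, the normalisation of the tilted measure. -/
lemma setIntegral_exp_eq {Ω : Type*} [MeasurableSpace Ω] {μ : Measure Ω}
    [IsProbabilityMeasure μ] {Y D : Ω → ℝ} (hD : AEMeasurable D μ) {a d V C S : ℝ} (hS : 0 ≤ S)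
    (hexp : Integrable (fun ω => Real.exp (Y ω)) μ)
    (h : ∀ t : ℝ, ∫ ω, Real.exp (Y ω + t * D ω) ∂μ =
      Real.exp (a + t * d + (V + 2 * t * C + t ^ 2 * S) / 2))
    {A : Set ℝ} (hA : MeasurableSet A) :
    ∫ ω in D ⁻¹' A, Real.exp (Y ω) ∂μ =
      Real.exp (a + V / 2) * (gaussianReal (d + C) S.toNNReal).real A := by
  have h0 := h 0
  simp only [zero_mul, add_zero, mul_zero, ne_eq, OfNat.ofNat_ne_zero, not_false_eq_true,
    zero_pow] at h0
  have hD' : AEMeasurable D (μ.tilted Y) := hD.mono_ac (tilted_absolutelyContinuous μ Y)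
  rw [← map_tilted_eq_gaussianReal hD hS hexp h, map_measureReal_apply_of_aemeasurable hD' hA,
    measureReal_def, tilted_apply_eq_ofReal_integral,
    ENNReal.toReal_ofReal (integral_nonneg fun ω => by positivity), integral_div, h0]
  field_simp

lemma stdGaussianCDF_eq (x : ℝ) : stdGaussianCDF x = (gaussianReal 0 1).real (Set.Iic x) := by
  rw [measureReal_def, gaussianReal_apply_eq_integral _ one_ne_zero, ENNReal.toReal_ofReal
    (integral_nonneg fun t => gaussianPDFReal_nonneg _ _ _), stdGaussianCDF]
  congr 1
  funext t
  simp [gaussianPDFReal, div_eq_inv_mul]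

/-- The upper tail of a Gaussian at `0`, by writing it as the law of `m - √S Z` with `Z`
standard normal. -/
lemma gaussianReal_real_Ici {m S : ℝ} (hS : 0 < S) :
    (gaussianReal m S.toNNReal).real (Set.Ici 0) = stdGaussianCDF (m / Real.sqrt S) := by
  have hs : 0 < Real.sqrt S := Real.sqrt_pos.2 hS
  have hmap : (gaussianReal 0 1).map (fun z => m - Real.sqrt S * z) =
      gaussianReal m S.toNNReal := by
    have h1 := gaussianReal_map_const_mul (μ := 0) (v := 1) (Real.sqrt S)
    have h2 := gaussianReal_map_const_sub (μ := Real.sqrt S * 0)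
      (v := .mk (Real.sqrt S ^ 2) (sq_nonneg _) * 1) m
    rw [← h1, Measure.map_map (by fun_prop) (by fun_prop)] at h2
    convert! h2 using 2
    · simp
    · ext
      simp [Real.sq_sqrt hS.le, hS.le]
  rw [← hmap, map_measureReal_apply (by fun_prop) measurableSet_Ici, stdGaussianCDF_eq]
  congr 1
  ext z
  simp only [Set.mem_preimage, Set.mem_Ici, Set.mem_Iic, le_div_iff₀ hs, sub_nonneg]
  rw [mul_comm]

lemma gaussianReal_real_Ioi {m S : ℝ} (hS : 0 < S) :
    (gaussianReal m S.toNNReal).real (Set.Ioi 0) = stdGaussianCDF (m / Real.sqrt S) := by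
  have : NullSingletonClass (gaussianReal m S.toNNReal) :=
    nullSingletonClass_gaussianReal (by simpa using hS)
  rw [← gaussianReal_real_Ici hS]
  exact measureReal_congr Ioi_ae_eq_Ici

/-- If `X₁ ~ N(m₁, σ₁²)` and `X₂ ~ N(m₂, σ₂²)` are jointly Gaussian with correlation `ρ₁₂`,
then `E[exp (max (X₁, X₂))]` is given by the two-term Gaussian CDF formula. -/
theorem stmt_6 {Ω : Type*} [MeasurableSpace Ω] (μ : Measure Ω) [IsProbabilityMeasure μ]
    (N₁ N₂ : Ω → ℝ) (m₁ m₂ σ₁ σ₂ ρ₁₂ : ℝ)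
    (hσ₁ : 0 < σ₁) (hσ₂ : 0 < σ₂) (hρ : -1 < ρ₁₂) (hρ' : ρ₁₂ < 1)
    (hs : 0 < σ₁ ^ 2 + σ₂ ^ 2 - 2 * ρ₁₂ * σ₁ * σ₂)
    (hjoint : ∀ a b : ℝ,
      Measure.map (fun ω => a * N₁ ω + b * N₂ ω) μ =
        gaussianReal 0 (Real.toNNReal (a ^ 2 + 2 * a * b * ρ₁₂ + b ^ 2)))
    (X₁ X₂ : Ω → ℝ)
    (hX₁ : X₁ = fun ω => m₁ + σ₁ * N₁ ω) (hX₂ : X₂ = fun ω => m₂ + σ₂ * N₂ ω) :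
    ∫ ω, Real.exp (max (X₁ ω) (X₂ ω)) ∂μ =
      Real.exp (m₁ + σ₁ ^ 2 / 2) *
          stdGaussianCDF ((m₁ - m₂ + σ₁ ^ 2 - ρ₁₂ * σ₁ * σ₂) /
            Real.sqrt (σ₁ ^ 2 + σ₂ ^ 2 - 2 * ρ₁₂ * σ₁ * σ₂)) +
        Real.exp (m₂ + σ₂ ^ 2 / 2) *
          stdGaussianCDF ((m₂ - m₁ + σ₂ ^ 2 - ρ₁₂ * σ₁ * σ₂) /
            Real.sqrt (σ₁ ^ 2 + σ₂ ^ 2 - 2 * ρ₁₂ * σ₁ * σ₂)) := by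
  have hmeas (a b : ℝ) : AEMeasurable (fun ω => a * N₁ ω + b * N₂ ω) μ :=
    aemeasurable_of_map_neZero (by rw [hjoint]; infer_instance)
  have hmgf (c a b : ℝ) : ∫ ω, Real.exp (c + (a * N₁ ω + b * N₂ ω)) ∂μ =
      Real.exp (c + (a ^ 2 + 2 * a * b * ρ₁₂ + b ^ 2) / 2) := by
    have hq : 0 ≤ a ^ 2 + 2 * a * b * ρ₁₂ + b ^ 2 := by
      have : 0 ≤ (1 - ρ₁₂) * (1 + ρ₁₂) := mul_nonneg (by linarith) (by linarith)
      nlinarith [sq_nonneg (a + ρ₁₂ * b), mul_nonneg this (sq_nonneg b)]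
    have h1 := mgf_gaussianReal (hjoint a b) 1
    rw [mgf, Real.coe_toNNReal _ hq] at h1
    simp only [one_mul, zero_add, one_pow, mul_one] at h1
    simp only [Real.exp_add c]
    rw [integral_const_mul, h1]
  -- A function with nonzero Bochner integral is integrable.
  have hexp (c a b : ℝ) : Integrable (fun ω => Real.exp (c + (a * N₁ ω + b * N₂ ω))) μ := by
    by_contra hn
    have := hmgf c a b
    rw [integral_undef hn] at this
    exact (Real.exp_pos _).ne this
  have hX₁m : AEMeasurable X₁ μ := by
    convert! (hmeas σ₁ 0).const_add m₁ using 1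
    simp [hX₁]
  have hX₂m : AEMeasurable X₂ μ := by
    convert! (hmeas 0 σ₂).const_add m₂ using 1
    simp [hX₂]
  have hi₁ : Integrable (fun ω => Real.exp (X₁ ω)) μ := by
    convert! hexp m₁ σ₁ 0 using 3
    simp [hX₁]
  have hi₂ : Integrable (fun ω => Real.exp (X₂ ω)) μ := by
    convert! hexp m₂ 0 σ₂ using 3
    simp [hX₂]
  have hD : AEMeasurable (fun ω => X₁ ω - X₂ ω) μ := hX₁m.sub hX₂m
  have hD' : AEMeasurable (fun ω => X₂ ω - X₁ ω) μ := hX₂m.sub hX₁m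
  have e₁ := setIntegral_exp_eq (a := m₁) (d := m₁ - m₂) (V := σ₁ ^ 2)
    (C := σ₁ ^ 2 - ρ₁₂ * σ₁ * σ₂) hD hs.le hi₁ (fun t => by
      convert! hmgf (m₁ + t * (m₁ - m₂)) (σ₁ + t * σ₁) (-(t * σ₂)) using 3
      · simp only [hX₁, hX₂]
        ring_nf
      · ring) (measurableSet_Ici (a := 0))
  have e₂ := setIntegral_exp_eq (a := m₂) (d := m₂ - m₁) (V := σ₂ ^ 2)
    (C := σ₂ ^ 2 - ρ₁₂ * σ₁ * σ₂) hD' hs.le hi₂ (fun t => by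
      convert! hmgf (m₂ + t * (m₂ - m₁)) (-(t * σ₁)) (σ₂ + t * σ₂) using 3
      · simp only [hX₁, hX₂]
        ring_nf
      · ring) (measurableSet_Ioi (a := 0))
  rw [gaussianReal_real_Ici hs, ← add_sub_assoc] at e₁
  rw [gaussianReal_real_Ioi hs, ← add_sub_assoc] at e₂
  have hcompl : (fun ω => X₂ ω - X₁ ω) ⁻¹' Set.Ioi 0 =
      ((fun ω => X₁ ω - X₂ ω) ⁻¹' Set.Ici 0)ᶜ := by
    ext ω
    simp
  have hE : NullMeasurableSet ((fun ω => X₁ ω - X₂ ω) ⁻¹' Set.Ici 0) μ :=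
    hD.nullMeasurable measurableSet_Ici
  have himax : Integrable (fun ω => Real.exp (max (X₁ ω) (X₂ ω))) μ := by
    convert! hi₁.sup hi₂ using 1
    funext ω
    exact Real.exp_monotone.map_max
  rw [← e₁, ← e₂, hcompl, ← integral_add_compl₀ hE himax]
  congr 1
  · refine setIntegral_congr_fun₀ hE fun ω hω => ?_
    have : X₂ ω ≤ X₁ ω := by simpa using hω
    simp only [max_eq_left this]
  · refine setIntegral_congr_fun₀ hE.compl fun ω hω => ?_
    have : X₁ ω < X₂ ω := by simpa using hω
    simp only [max_eq_right this.le]
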